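/- Let n, m ≥ 1, let D ∈ ℝ^{nm×nm} be the upper bidiagonal matrix with 1's on its diagonal and −1's on its super-diagonal, and let P ∈ ℝ^{nm×nm} be the permutation matrix mapping the column-major vectorization of an n×m image to its row-major vectorization. Fix b ∈ ℝ^{nm}, λ > 0, μ₁ > 0, μ₂ > 0, and consider the augmented Lagrangian L(d_x,d_y,u,v,γ_x,γ_y,γ_z) = ½‖u−b‖² + λ(‖d_x‖₁ + ‖d_y‖₁) + γ_xᵀ(Du − d_x) + γ_yᵀ(Dv − d_y) + γ_zᵀ(Pu − v) + (1/(2μ₁))(‖Du − d_x‖² + ‖Dv − d_y‖²) + (1/(2μ₂))‖Pu − v‖². Suppose the sequences generated by Algorithm ADAL satisfy for all k: (d_x^{k+1}, v^{k+1}) jointly minimizes L(·, d_y^k, u^k, ·, γ_x^k, γ_y^k, γ_z^k) over (d_x, v); (d_y^{k+1}, u^{k+1}) jointly minimizes L(d_x^{k+1}, ·, ·, v^{k+1}, γ_x^k, γ_y^k, γ_z^k) over (d_y, u); and γ_x^{k+1} = γ_x^k + (1/μ₁)(Du^{k+1} − d_x^{k+1}), γ_y^{k+1} = γ_y^k + (1/μ₁)(Dv^{k+1}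 − d_y^{k+1}), γ_z^{k+1} = γ_z^k + (1/μ₂)(Pu^{k+1} − v^{k+1}). Then the sequence {(d_x^k, d_y^k, u^k, v^k, γ_x^k, γ_y^k, γ_z^k)} converges, and its limit point (d_x*, d_y*, u*, v*, γ*) is a Kuhn–Tucker pair of the constrained problem min λ(‖d_x‖₁ + ‖d_y‖₁) + ½‖u−b‖² subject to d_x = Du, d_y = Dv, v = Pu; in particular u* is the minimizer of the anisotropic TV denoising problem min_u λ(‖Du‖₁ + ‖DPu‖₁) + ½‖u−b‖². -/

import Mathlib

/-!
The algorithm is a two-block alternating direction method of multipliers. Stacking the three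
constraints, put `a = (-d_x, D v, -v)` and `c = (D u, -d_y, P u)`; the constraints read `a + c = 0`,
and since both maps are injective (`P` is a permutation) the costs become convex continuous functions
of `a` and `c` on the linear subspaces `setA` and `setB` (`augLagrangian_eq`).

A saddle point exists (`exists_saddle`): the dual problem is a projection of `b` onto the linear image
of a box, so its minimum is attained by compactness, and the optimality condition of the projection
gives the multipliers (`exists_box_dual`).

For the convergence (`admm_converges`), the distance `‖γ - γ*‖²_{1/w} + ‖c - c*‖²_w` to any saddle
point decreases by at least the squared step length from the first iterate on (`lyap_descent`). Hence
the iterates are bounded and the steps and the residual `a + c` tend to `0`. A cluster point is a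
saddle point by passing to the limit in the optimality conditions, and the monotone distance to
this cluster point tends to `0` along a subsequence, hence along the whole sequence.
-/

open scoped BigOperators

noncomputable section

/-- Euclidean inner product on `Fin N → ℝ`. -/
def dotv {N : ℕ} (x y : Fin N → ℝ) : ℝ := ∑ i, x i * y i

/-- Squared Euclidean norm on `Fin N → ℝ`. -/
def sqnorm {N : ℕ} (x : Fin N → ℝ) : ℝ := ∑ i, (x i) ^ 2

/-- The ℓ¹ norm on `Fin N → ℝ`. -/
def l1norm {N : ℕ} (x : Fin N → ℝ) : ℝ := ∑ i, |x i|

/-- The upper bidiagonal difference matrix with `1`s on the diagonal and `-1`s on the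
super-diagonal. -/
def Dmat (N : ℕ) : Matrix (Fin N) (Fin N) ℝ :=
  Matrix.of fun i j => if j = i then 1 else if (j : ℕ) = (i : ℕ) + 1 then -1 else 0

/-- Column-major indexing of an `n × m` image: pixel `(i, j)` has index `i + n * j`. -/
def colMajorEquiv (n m : ℕ) : Fin n × Fin m ≃ Fin (n * m) :=
  ((Equiv.prodComm (Fin n) (Fin m)).trans finProdFinEquiv).trans (finCongr (Nat.mul_comm m n))

/-- Row-major indexing of an `n × m` image: pixel `(i, j)` has index `j + m * i`. -/
def rowMajorEquiv (n m : ℕ) : Fin n × Fin m ≃ Fin (n * m) := finProdFinEquiv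

/-- The permutation sending the column-major index of a pixel to its row-major index. -/
def colToRowPerm (n m : ℕ) : Equiv.Perm (Fin (n * m)) :=
  (colMajorEquiv n m).symm.trans (rowMajorEquiv n m)

/-- The permutation matrix mapping the column-major vectorization of an `n × m` image to
its row-major vectorization: `(Pmat n m).mulVec u (rowMajorEquiv (i,j)) = u (colMajorEquiv (i,j))`. -/
def Pmat (n m : ℕ) : Matrix (Fin (n * m)) (Fin (n * m)) ℝ :=
  Matrix.of fun k l => if k = colToRowPerm n m l then 1 else 0

/-- The (ordinary, non-augmented) Lagrangian of the split anisotropic TV denoising problem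
`min λ(‖d_x‖₁ + ‖d_y‖₁) + ½‖u - b‖²  s.t.  d_x = D u, d_y = D v, v = P u`. -/
def anisoLagrangian {N : ℕ} (D P : Matrix (Fin N) (Fin N) ℝ) (b : Fin N → ℝ) (lam : ℝ)
    (dx dy u v γx γy γz : Fin N → ℝ) : ℝ :=
  lam * (l1norm dx + l1norm dy) + (1 / 2) * sqnorm (u - b)
    + dotv γx (D.mulVec u - dx) + dotv γy (D.mulVec v - dy) + dotv γz (P.mulVec u - v)

/-- The augmented Lagrangian of the split anisotropic TV denoising problem. -/
def anisoAugLagrangian {N : ℕ} (D P : Matrix (Fin N) (Fin N) ℝ) (b : Fin N → ℝ)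
    (lam μ₁ μ₂ : ℝ) (dx dy u v γx γy γz : Fin N → ℝ) : ℝ :=
  anisoLagrangian D P b lam dx dy u v γx γy γz
    + (1 / (2 * μ₁)) * (sqnorm (D.mulVec u - dx) + sqnorm (D.mulVec v - dy))
    + (1 / (2 * μ₂)) * sqnorm (P.mulVec u - v)

open Filter Topology


/-! ### Convergence of the abstract two-block method -/

/-- First-order optimality as a variational inequality: at a minimizer over a convex set of a convex
function plus a smooth quadratic, only the quadratic part needs to be differentiated. -/
theorem vi_of_min {ι : Type*} [Fintype ι] {w : ι → ℝ} {C : Set (ι → ℝ)} {φ : (ι → ℝ) → ℝ}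
    (hφ : ConvexOn ℝ C φ) {x g e : ι → ℝ} (hx : x ∈ C)
    (hmin : ∀ y ∈ C, φ x + ∑ i, g i * x i + (1 / 2) * ∑ i, w i * (x i + e i) ^ 2
      ≤ φ y + ∑ i, g i * y i + (1 / 2) * ∑ i, w i * (y i + e i) ^ 2) :
    ∀ y ∈ C, 0 ≤ φ y - φ x + ∑ i, (g i + w i * (x i + e i)) * (y i - x i) := by
  intro y hy
  set A := φ y - φ x + ∑ i, (g i + w i * (x i + e i)) * (y i - x i) with hA
  set Q := (1 / 2) * ∑ i, w i * (y i - x i) ^ 2 with hQ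
  have key : ∀ t : ℝ, 0 < t → t ≤ 1 → 0 ≤ A + t * Q := by
    intro t ht ht1
    have hz : (1 - t) • x + t • y ∈ C := hφ.1 hx hy (by linarith) ht.le (by ring)
    have h1 := hmin _ hz
    have h2 := hφ.2 hx hy (by linarith : 0 ≤ 1 - t) ht.le (by ring)
    simp only [smul_eq_mul] at h2
    have h3 : (∑ i, g i * ((1 - t) • x + t • y) i
          + (1 / 2) * ∑ i, w i * (((1 - t) • x + t • y) i + e i) ^ 2)
        = (∑ i, g i * x i + (1 / 2) * ∑ i, w i * (x i + e i) ^ 2)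
          + t * (∑ i, (g i + w i * (x i + e i)) * (y i - x i)) + t * (t * Q) := by
      simp only [hQ, Finset.mul_sum, ← Finset.sum_add_distrib]
      refine Finset.sum_congr rfl fun i _ => ?_
      simp only [Pi.add_apply, Pi.smul_apply, smul_eq_mul]
      ring
    have h4 : 0 ≤ t * (A + t * Q) := by rw [hA]; nlinarith
    exact nonneg_of_mul_nonneg_right h4 ht
  have hlim : Tendsto (fun t : ℝ => A + t * Q) (𝓝[>] 0) (𝓝 (A + 0 * Q)) :=
    (Continuous.tendsto (by fun_prop) 0).mono_left nhdsWithin_le_nhds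
  rw [zero_mul, add_zero] at hlim
  refine ge_of_tendsto hlim ?_
  filter_upwards [Ioc_mem_nhdsGT (zero_lt_one' ℝ)] with t ht using key t ht.1 ht.2

/-- The weighted squared distance `‖g - g₀‖²_{1/w} + ‖c - c₀‖²_w` between multiplier / second-block
pairs. It serves both as the Lyapunov function of the method, with `(g₀, c₀)` a saddle point, and as
the size of the step between consecutive iterates. -/
def lyap {ι : Type*} [Fintype ι] (w g₀ c₀ g c : ι → ℝ) : ℝ :=
  ∑ i, ((g i - g₀ i) ^ 2 / w i + w i * (c i - c₀ i) ^ 2)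

theorem lyap_nonneg {ι : Type*} [Fintype ι] {w : ι → ℝ} (hw : ∀ i, 0 < w i) (g₀ c₀ g c : ι → ℝ) :
    0 ≤ lyap w g₀ c₀ g c :=
  Finset.sum_nonneg fun i _ => by have := hw i; positivity

theorem coord_le_lyap {ι : Type*} [Fintype ι] {w : ι → ℝ} (hw : ∀ i, 0 < w i)
    (g₀ c₀ g c : ι → ℝ) (i : ι) :
    (g i - g₀ i) ^ 2 / w i + w i * (c i - c₀ i) ^ 2 ≤ lyap w g₀ c₀ g c :=
  Finset.single_le_sum (f := fun i => (g i - g₀ i) ^ 2 / w i + w i * (c i - c₀ i) ^ 2)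
    (fun i _ => by have := hw i; positivity) (Finset.mem_univ i)

theorem dual_sq_le {ι : Type*} [Fintype ι] {w : ι → ℝ} (hw : ∀ i, 0 < w i)
    (g₀ c₀ g c : ι → ℝ) (i : ι) : (g i - g₀ i) ^ 2 ≤ w i * lyap w g₀ c₀ g c := by
  have h := coord_le_lyap hw g₀ c₀ g c i
  have hi := hw i
  have h2 : 0 ≤ w i * (c i - c₀ i) ^ 2 := by positivity
  have h3 : (g i - g₀ i) ^ 2 / w i ≤ lyap w g₀ c₀ g c := by linarith
  rw [div_le_iff₀ hi] at h3
  linarith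

theorem primal_sq_le {ι : Type*} [Fintype ι] {w : ι → ℝ} (hw : ∀ i, 0 < w i)
    (g₀ c₀ g c : ι → ℝ) (i : ι) : (c i - c₀ i) ^ 2 ≤ (w i)⁻¹ * lyap w g₀ c₀ g c := by
  have h := coord_le_lyap hw g₀ c₀ g c i
  have hi := hw i
  have h2 : 0 ≤ (g i - g₀ i) ^ 2 / w i := by positivity
  rw [inv_mul_eq_div, le_div_iff₀ hi]
  linarith

theorem tendsto_sub_zero_of_sq_le {f g B : ℕ → ℝ} {K : ℝ} (hB : Tendsto B atTop (𝓝 0))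
    (h : ∀ k, (f k - g k) ^ 2 ≤ K * B k) : Tendsto (fun k => f k - g k) atTop (𝓝 0) := by
  have h1 : Tendsto (fun k => (f k - g k) ^ 2) atTop (𝓝 0) := by
    refine squeeze_zero (fun k => sq_nonneg _) h ?_
    simpa using hB.const_mul K
  have h2 := h1.sqrt
  simp only [Real.sqrt_sq_eq_abs, Real.sqrt_zero] at h2
  exact (tendsto_zero_iff_abs_tendsto_zero _).2 h2

theorem tendsto_of_lyap {ι : Type*} [Fintype ι] {w : ι → ℝ} (hw : ∀ i, 0 < w i)
    {g₀ c₀ g c : ℕ → ι → ℝ}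
    (h : Tendsto (fun k => lyap w (g₀ k) (c₀ k) (g k) (c k)) atTop (𝓝 0)) :
    Tendsto (fun k => g k - g₀ k) atTop (𝓝 0) ∧ Tendsto (fun k => c k - c₀ k) atTop (𝓝 0) := by
  constructor <;> refine tendsto_pi_nhds.2 fun i => ?_
  · exact tendsto_sub_zero_of_sq_le h fun k => dual_sq_le hw _ _ _ _ i
  · exact tendsto_sub_zero_of_sq_le h fun k => primal_sq_le hw _ _ _ _ i

/-- `(a, c)` with multiplier `g` is a Kuhn–Tucker point of
`min φ a + ψ c` subject to `a + c = 0`, `a ∈ A`, `c ∈ B`: feasibility, and minimality of the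
Lagrangian in each of the two blocks. -/
structure IsSaddle {ι : Type*} [Fintype ι] (A B : Set (ι → ℝ)) (φ ψ : (ι → ℝ) → ℝ)
    (a c g : ι → ℝ) : Prop where
  memA : a ∈ A
  memB : c ∈ B
  feas : a + c = 0
  minA : ∀ x ∈ A, φ a + ∑ i, g i * a i ≤ φ x + ∑ i, g i * x i
  minB : ∀ y ∈ B, ψ c + ∑ i, g i * c i ≤ ψ y + ∑ i, g i * y i

/-- One step of the method decreases the distance to any saddle point by at least the squared length
of the step. The inequality is the sum of the optimality conditions of the new iterate, the saddle
inequalities, and the monotonicity of the second block between the two consecutive iterates `c`,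
`c'`; the last one requires that `c` is optimal with multiplier `g` (`hB`). -/
theorem lyap_descent {ι : Type*} [Fintype ι] {w : ι → ℝ} (hw : ∀ i, 0 < w i)
    {A B : Set (ι → ℝ)} {φ ψ : (ι → ℝ) → ℝ} {a₀ c₀ g₀ a' c c' g g' : ι → ℝ}
    (hs : IsSaddle A B φ ψ a₀ c₀ g₀) (ha' : a' ∈ A) (hc : c ∈ B) (hc' : c' ∈ B)
    (hg : ∀ i, g' i = g i + w i * (a' i + c' i))
    (hA : ∀ x ∈ A, 0 ≤ φ x - φ a' + ∑ i, (g' i - w i * (c' i - c i)) * (x i - a' i))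
    (hB : ∀ y ∈ B, 0 ≤ ψ y - ψ c + ∑ i, g i * (y i - c i))
    (hB' : ∀ y ∈ B, 0 ≤ ψ y - ψ c' + ∑ i, g' i * (y i - c' i)) :
    lyap w g₀ c₀ g' c' + lyap w g c g' c' ≤ lyap w g₀ c₀ g c := by
  have e1 := hA a₀ hs.memA
  have e2 := hB' c₀ hs.memB
  have e3 := hB' c hc
  have e4 := hB c' hc'
  have e5 := hs.minA a' ha'
  have e6 := hs.minB c' hc'
  have id : lyap w g₀ c₀ g c - lyap w g₀ c₀ g' c' - lyap w g c g' c'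
      = 2 * ((∑ i, (g' i - w i * (c' i - c i)) * (a₀ i - a' i))
        + (∑ i, g₀ i * a' i - ∑ i, g₀ i * a₀ i) + (∑ i, g' i * (c₀ i - c' i))
        + (∑ i, g₀ i * c' i - ∑ i, g₀ i * c₀ i)
        + (∑ i, g' i * (c i - c' i)) + ∑ i, g i * (c' i - c i)) := by
    simp only [lyap, ← Finset.sum_sub_distrib, ← Finset.sum_add_distrib, Finset.mul_sum]
    refine Finset.sum_congr rfl fun i _ => ?_
    have hi := (hw i).ne'
    have h0 : a₀ i = - c₀ i := eq_neg_of_add_eq_zero_left (congrFun hs.feas i)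
    have h1 : a' i = (g' i - g i) / w i - c' i := by
      rw [hg i]; field_simp; ring
    rw [h0, h1]
    field_simp
    ring
  linarith

/-- Global convergence of the two-block alternating direction method with diagonal penalty weights
for `min φ a + ψ c` subject to `a + c = 0`, `a ∈ A`, `c ∈ B`, given that a saddle point exists. -/
theorem admm_converges {ι : Type*} [Fintype ι] {w : ι → ℝ} (hw : ∀ i, 0 < w i)
    {A B : Set (ι → ℝ)} {φ ψ : (ι → ℝ) → ℝ} (hAc : IsClosed A) (hBc : IsClosed B)
    (hφ : ConvexOn ℝ A φ) (hψ : ConvexOn ℝ B ψ) (hφc : Continuous φ) (hψc : Continuous ψ)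
    {a c g : ℕ → ι → ℝ} (ha : ∀ k, a k ∈ A) (hc : ∀ k, c k ∈ B)
    (hminA : ∀ k, ∀ x ∈ A,
      φ (a (k + 1)) + ∑ i, g k i * a (k + 1) i + (1 / 2) * ∑ i, w i * (a (k + 1) i + c k i) ^ 2
      ≤ φ x + ∑ i, g k i * x i + (1 / 2) * ∑ i, w i * (x i + c k i) ^ 2)
    (hminB : ∀ k, ∀ y ∈ B,
      ψ (c (k + 1)) + ∑ i, g k i * c (k + 1) i
        + (1 / 2) * ∑ i, w i * (c (k + 1) i + a (k + 1) i) ^ 2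
      ≤ ψ y + ∑ i, g k i * y i + (1 / 2) * ∑ i, w i * (y i + a (k + 1) i) ^ 2)
    (hg : ∀ k i, g (k + 1) i = g k i + w i * (a (k + 1) i + c (k + 1) i))
    (hsad : ∃ a₀ c₀ g₀, IsSaddle A B φ ψ a₀ c₀ g₀) :
    ∃ a₀ c₀ g₀, IsSaddle A B φ ψ a₀ c₀ g₀ ∧ Tendsto a atTop (𝓝 a₀) ∧ Tendsto c atTop (𝓝 c₀) ∧
      Tendsto g atTop (𝓝 g₀) := by
  have viA : ∀ k, ∀ x ∈ A, 0 ≤ φ x - φ (a (k + 1))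
      + ∑ i, (g (k + 1) i - w i * (c (k + 1) i - c k i)) * (x i - a (k + 1) i) := by
    intro k x hx
    convert vi_of_min hφ (ha (k + 1)) (hminA k) x hx using 4 with i
    rw [hg]; ring
  have viB : ∀ k, ∀ y ∈ B, 0 ≤ ψ y - ψ (c (k + 1))
      + ∑ i, g (k + 1) i * (y i - c (k + 1) i) := by
    intro k y hy
    convert vi_of_min hψ (hc (k + 1)) (hminB k) y hy using 4 with i
    rw [hg]; ring
  -- The indices start at `1`: the pair `(c 0, g 0)` is arbitrary and satisfies no optimality
  -- condition, so the descent inequality may fail at the first step.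
  have desc : ∀ a₀ c₀ g₀, IsSaddle A B φ ψ a₀ c₀ g₀ → ∀ k,
      lyap w g₀ c₀ (g (k + 2)) (c (k + 2)) + lyap w (g (k + 1)) (c (k + 1)) (g (k + 2)) (c (k + 2))
        ≤ lyap w g₀ c₀ (g (k + 1)) (c (k + 1)) := fun a₀ c₀ g₀ hs k =>
    lyap_descent hw hs (ha (k + 2)) (hc (k + 1)) (hc (k + 2)) (hg (k + 1)) (viA (k + 1)) (viB k)
      (viB (k + 1))
  have anti : ∀ a₀ c₀ g₀, IsSaddle A B φ ψ a₀ c₀ g₀ →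
      Antitone fun k => lyap w g₀ c₀ (g (k + 1)) (c (k + 1)) := fun a₀ c₀ g₀ hs =>
    antitone_nat_of_succ_le fun k => by
      have := desc a₀ c₀ g₀ hs k
      have := lyap_nonneg hw (g (k + 1)) (c (k + 1)) (g (k + 2)) (c (k + 2))
      show lyap w g₀ c₀ (g (k + 2)) (c (k + 2)) ≤ _
      linarith
  obtain ⟨a₀, c₀, g₀, hs⟩ := hsad
  set V := fun k => lyap w g₀ c₀ (g (k + 1)) (c (k + 1)) with hV
  have hVanti : Antitone V := anti a₀ c₀ g₀ hs
  have hVlim := tendsto_atTop_ciInf hVanti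
    ⟨0, by rintro _ ⟨k, rfl⟩; exact lyap_nonneg hw _ _ _ _⟩
  have hinc : Tendsto (fun k => lyap w (g (k + 1)) (c (k + 1)) (g (k + 2)) (c (k + 2))) atTop
      (𝓝 0) := by
    have h1 : Tendsto (fun k => V k - V (k + 1)) atTop (𝓝 0) := by
      simpa using hVlim.sub ((tendsto_add_atTop_iff_nat 1).2 hVlim)
    refine squeeze_zero (fun k => lyap_nonneg hw _ _ _ _) (fun k => ?_) h1
    have := desc a₀ c₀ g₀ hs k
    simp only [hV]
    linarith
  obtain ⟨hgd, hcd⟩ := tendsto_of_lyap (g := fun k => g (k + 2)) (c := fun k => c (k + 2))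
    (g₀ := fun k => g (k + 1)) (c₀ := fun k => c (k + 1)) hw hinc
  have hres : Tendsto (fun k => a (k + 2) + c (k + 2)) atTop (𝓝 0) := by
    refine tendsto_pi_nhds.2 fun i => ?_
    have h1 := ((tendsto_pi_nhds.1 hgd i).const_mul (w i)⁻¹)
    simp only [Pi.zero_apply, mul_zero] at h1
    refine h1.congr fun k => ?_
    have hi := (hw i).ne'
    simp only [Pi.sub_apply, Pi.add_apply]
    rw [hg (k + 1) i]
    field_simp
    ring
  -- The iterates stay in a sublevel set of `V`, which is bounded, hence they have a cluster point.
  obtain ⟨p, s, hsm, hp⟩ : ∃ p : (ι → ℝ) × (ι → ℝ), ∃ s : ℕ → ℕ, StrictMono s ∧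
      Tendsto (fun n => (g (s n + 1), c (s n + 1))) atTop (𝓝 p) := by
    have hK : IsCompact ((Set.univ.pi fun i => Set.Icc (g₀ i - √(w i * V 0)) (g₀ i + √(w i * V 0)))
        ×ˢ (Set.univ.pi fun i =>
          Set.Icc (c₀ i - √((w i)⁻¹ * V 0)) (c₀ i + √((w i)⁻¹ * V 0)))) :=
      (isCompact_univ_pi fun i => isCompact_Icc).prod (isCompact_univ_pi fun i => isCompact_Icc)
    have hmem : ∀ n, (g (n + 1), c (n + 1)) ∈
        ((Set.univ.pi fun i => Set.Icc (g₀ i - √(w i * V 0)) (g₀ i + √(w i * V 0)))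
        ×ˢ (Set.univ.pi fun i =>
          Set.Icc (c₀ i - √((w i)⁻¹ * V 0)) (c₀ i + √((w i)⁻¹ * V 0)))) := by
      intro n
      have hn : V n ≤ V 0 := hVanti (Nat.zero_le n)
      refine ⟨fun i _ => ?_, fun i _ => ?_⟩
      · have h := Real.abs_le_sqrt ((dual_sq_le hw g₀ c₀ (g (n + 1)) (c (n + 1)) i).trans
          (mul_le_mul_of_nonneg_left hn (hw i).le))
        have := abs_le.1 h
        constructor <;> dsimp only <;> linarith [this.1, this.2]
      · have h := Real.abs_le_sqrt ((primal_sq_le hw g₀ c₀ (g (n + 1)) (c (n + 1)) i).trans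
          (mul_le_mul_of_nonneg_left hn (inv_pos.2 (hw i)).le))
        have := abs_le.1 h
        constructor <;> dsimp only <;> linarith [this.1, this.2]
    obtain ⟨p, -, s, hsm, hp⟩ := hK.tendsto_subseq hmem
    exact ⟨p, s, hsm, hp⟩
  obtain ⟨g₁, c₁⟩ := p
  have hg1 : Tendsto (fun n => g (s n + 1)) atTop (𝓝 g₁) := (continuous_fst.tendsto _).comp hp
  have hc1 : Tendsto (fun n => c (s n + 1)) atTop (𝓝 c₁) := (continuous_snd.tendsto _).comp hp
  have hcd' := hcd.comp hsm.tendsto_atTop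
  have hg2 : Tendsto (fun n => g (s n + 2)) atTop (𝓝 g₁) := by
    simpa using (hgd.comp hsm.tendsto_atTop).add hg1
  have hc2 : Tendsto (fun n => c (s n + 2)) atTop (𝓝 c₁) := by
    simpa using hcd'.add hc1
  have ha2 : Tendsto (fun n => a (s n + 2)) atTop (𝓝 (-c₁)) := by
    simpa using (hres.comp hsm.tendsto_atTop).sub hc2
  have hs1 : IsSaddle A B φ ψ (-c₁) c₁ g₁ := by
    refine ⟨hAc.mem_of_tendsto ha2 (Eventually.of_forall fun n => ha _),
      hBc.mem_of_tendsto hc1 (Eventually.of_forall fun n => hc _), by simp, fun x hx => ?_,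
      fun y hy => ?_⟩
    · have hl : Tendsto (fun n => φ x - φ (a (s n + 2))
          + ∑ i, (g (s n + 2) i - w i * (c (s n + 2) i - c (s n + 1) i)) * (x i - a (s n + 2) i))
          atTop (𝓝 (φ x - φ (-c₁) + ∑ i, (g₁ i - w i * (c₁ i - c₁ i)) * (x i - (-c₁) i))) := by
        refine (tendsto_const_nhds.sub ((hφc.tendsto _).comp ha2)).add
          (tendsto_finsetSum _ fun i _ => ?_)
        exact ((tendsto_pi_nhds.1 hg2 i).sub (((tendsto_pi_nhds.1 hc2 i).sub
          (tendsto_pi_nhds.1 hc1 i)).const_mul _)).mul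
          (tendsto_const_nhds.sub (tendsto_pi_nhds.1 ha2 i))
      have h := ge_of_tendsto' hl fun n => viA (s n + 1) x hx
      simp only [sub_self, mul_zero, sub_zero, mul_sub, Finset.sum_sub_distrib] at h
      linarith
    · have hl : Tendsto (fun n => ψ y - ψ (c (s n + 1))
          + ∑ i, g (s n + 1) i * (y i - c (s n + 1) i))
          atTop (𝓝 (ψ y - ψ c₁ + ∑ i, g₁ i * (y i - c₁ i))) := by
        refine (tendsto_const_nhds.sub ((hψc.tendsto _).comp hc1)).add
          (tendsto_finsetSum _ fun i _ => ?_)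
        exact (tendsto_pi_nhds.1 hg1 i).mul (tendsto_const_nhds.sub (tendsto_pi_nhds.1 hc1 i))
      have h := ge_of_tendsto' hl fun n => viB (s n) y hy
      simp only [mul_sub, Finset.sum_sub_distrib] at h
      linarith
  -- The distance to the cluster point is itself monotone, and vanishes along the subsequence.
  have hW : Tendsto (fun k => lyap w g₁ c₁ (g (k + 1)) (c (k + 1))) atTop (𝓝 0) := by
    have hsub : Tendsto (fun n => lyap w g₁ c₁ (g (s n + 1)) (c (s n + 1))) atTop (𝓝 0) := by
      have : Tendsto (fun n => lyap w g₁ c₁ (g (s n + 1)) (c (s n + 1))) atTop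
          (𝓝 (lyap w g₁ c₁ g₁ c₁)) := by
        refine tendsto_finsetSum _ fun i _ => ?_
        exact ((((tendsto_pi_nhds.1 hg1 i).sub_const _).pow 2).div_const _).add
          ((((tendsto_pi_nhds.1 hc1 i).sub_const _).pow 2).const_mul _)
      simpa [lyap] using this
    have hlim := tendsto_atTop_ciInf (anti _ _ _ hs1)
      ⟨0, by rintro _ ⟨k, rfl⟩; exact lyap_nonneg hw _ _ _ _⟩
    rwa [tendsto_nhds_unique (hlim.comp hsm.tendsto_atTop) hsub] at hlim
  obtain ⟨hgl, hcl⟩ := tendsto_of_lyap (g := fun k => g (k + 1)) (c := fun k => c (k + 1))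
    (g₀ := fun _ => g₁) (c₀ := fun _ => c₁) hw hW
  have hgl' : Tendsto g atTop (𝓝 g₁) :=
    (tendsto_add_atTop_iff_nat 1).1 (by simpa using hgl.add_const g₁)
  have hcl' : Tendsto c atTop (𝓝 c₁) :=
    (tendsto_add_atTop_iff_nat 1).1 (by simpa using hcl.add_const c₁)
  refine ⟨-c₁, c₁, g₁, hs1, ?_, hcl', hgl'⟩
  refine (tendsto_add_atTop_iff_nat 2).1 ?_
  simpa using hres.sub ((tendsto_add_atTop_iff_nat 2).2 hcl')

/-! ### Existence of a saddle point -/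

/-- Primal-dual solution of `min_u lam * ‖K u‖₁ + ½ ‖u - b‖²`. The multiplier `p` solves the dual
problem of projecting `b` onto the image under `Kᵀ` of the box `[-lam, lam]^κ`, a compact set, and
`u` is the residual; the variational inequality of the projection says that `p` maximizes
`⟨·, K u⟩` over the box. -/
theorem exists_box_dual {κ ν : Type*} [Fintype κ] [Fintype ν] (K : Matrix κ ν ℝ) (b : ν → ℝ)
    {lam : ℝ} (hlam : 0 < lam) :
    ∃ (p : κ → ℝ) (u : ν → ℝ), (∀ i, |p i| ≤ lam) ∧ u + K.vecMul p = b ∧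
      lam * ∑ i, |K.mulVec u i| ≤ ∑ i, p i * K.mulVec u i := by
  set box : Set (κ → ℝ) := Set.univ.pi fun _ => Set.Icc (-lam) lam with hbox
  have hboxc : IsCompact box := isCompact_univ_pi fun _ => isCompact_Icc
  have hboxv : Convex ℝ box := convex_pi fun _ _ => convex_Icc _ _
  have hne : box.Nonempty := ⟨0, fun i _ => ⟨by simpa using hlam.le, by simpa using hlam.le⟩⟩
  obtain ⟨p, hp, hmin⟩ := hboxc.exists_isMinOn hne
    (f := fun p => (1 / 2) * ∑ j, 1 * (K.vecMul p j + (-b) j) ^ 2)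
    (Continuous.continuousOn (by unfold Matrix.vecMul dotProduct; fun_prop))
  have vi := vi_of_min (w := 1) (φ := fun _ => 0) (g := 0) (e := -b)
    (convexOn_const (0 : ℝ) (hboxv.is_linear_image (f := fun p => K.vecMul p)
      ⟨fun x y => Matrix.add_vecMul K x y, fun c x => by simp [Matrix.smul_vecMul]⟩))
    (Set.mem_image_of_mem _ hp)
    (by
      rintro _ ⟨q, hq, rfl⟩
      simpa using hmin hq)
  set u := b - K.vecMul p with hu
  have hpi : ∀ i, |p i| ≤ lam := fun i => abs_le.2 (hp i trivial)
  refine ⟨p, u, hpi, by simp [hu], ?_⟩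
  -- `lam` times the sign pattern of `K u` is a point of the box maximizing `⟨q, K u⟩`
  set q : κ → ℝ := fun i => lam * SignType.sign (K.mulVec u i) with hq
  have hqb : q ∈ box := by
    intro i _
    rw [Set.mem_Icc, ← abs_le]
    rcases lt_trichotomy (K.mulVec u i) 0 with h | h | h <;> simp [hq, h, hlam.le, abs_of_pos hlam]
  have h := vi _ (Set.mem_image_of_mem _ hqb)
  have e1 : ∑ j, u j * (K.vecMul q j - K.vecMul p j)
      = ∑ i, q i * K.mulVec u i - ∑ i, p i * K.mulVec u i := by
    have h1 := Matrix.dotProduct_mulVec q K u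
    have h2 := Matrix.dotProduct_mulVec p K u
    simp only [dotProduct] at h1 h2
    rw [h1, h2, ← Finset.sum_sub_distrib]
    exact Finset.sum_congr rfl fun j _ => by ring
  have e2 : ∑ i, q i * K.mulVec u i = lam * ∑ i, |K.mulVec u i| := by
    rw [Finset.mul_sum]
    refine Finset.sum_congr rfl fun i _ => ?_
    rw [hq, mul_assoc, sign_mul_self]
  have e3 : ∑ j, u j * (K.vecMul q j - K.vecMul p j) ≤ 0 := by
    have : ∑ j, u j * (K.vecMul q j - K.vecMul p j)
        = -∑ j, ((0 : ν → ℝ) j + (1 : ν → ℝ) j * (K.vecMul p j + (-b) j))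
            * (K.vecMul q j - K.vecMul p j) := by
      rw [← Finset.sum_neg_distrib]
      refine Finset.sum_congr rfl fun j _ => ?_
      simp only [hu, Pi.sub_apply, Pi.zero_apply, Pi.one_apply, Pi.neg_apply]
      ring
    rw [this]
    simp only [sub_self, zero_add] at h
    simpa using h
  linarith

/-! ### The split problem as a two-block problem -/

/-- Index type of the three stacked constraints `D u - d_x`, `D v - d_y`, `P u - v`. -/
abbrev Blk (N : ℕ) : Type := Fin N ⊕ (Fin N ⊕ Fin N)

/-- The stacked vector `(x, y, z)`. -/
def pack {N : ℕ} (x y z : Fin N → ℝ) : Blk N → ℝ := Sum.elim x (Sum.elim y z)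

/-- The first block of a stacked vector. -/
def blk₁ {N : ℕ} (x : Blk N → ℝ) : Fin N → ℝ := fun i => x (Sum.inl i)

/-- The second block of a stacked vector. -/
def blk₂ {N : ℕ} (x : Blk N → ℝ) : Fin N → ℝ := fun i => x (Sum.inr (Sum.inl i))

/-- The third block of a stacked vector. -/
def blk₃ {N : ℕ} (x : Blk N → ℝ) : Fin N → ℝ := fun i => x (Sum.inr (Sum.inr i))

section Blocks
variable {N : ℕ}

@[simp] theorem blk₁_pack (x y z : Fin N → ℝ) : blk₁ (pack x y z) = x := rfl
@[simp] theorem blk₂_pack (x y z : Fin N → ℝ) : blk₂ (pack x y z) = y := rfl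
@[simp] theorem blk₃_pack (x y z : Fin N → ℝ) : blk₃ (pack x y z) = z := rfl

theorem pack_blk (x : Blk N → ℝ) : pack (blk₁ x) (blk₂ x) (blk₃ x) = x := by
  funext i; rcases i with i | i | i <;> rfl

theorem sum_blk (f : Blk N → ℝ) :
    ∑ i, f i = ∑ i, f (.inl i) + (∑ i, f (.inr (.inl i)) + ∑ i, f (.inr (.inr i))) := by
  rw [Fintype.sum_sum_type, Fintype.sum_sum_type]

theorem continuous_blk₁ : Continuous (blk₁ : (Blk N → ℝ) → _) := by unfold blk₁; fun_prop
theorem continuous_blk₂ : Continuous (blk₂ : (Blk N → ℝ) → _) := by unfold blk₂; fun_prop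
theorem continuous_blk₃ : Continuous (blk₃ : (Blk N → ℝ) → _) := by unfold blk₃; fun_prop

theorem continuous_mulVec (D : Matrix (Fin N) (Fin N) ℝ) : Continuous fun x => D.mulVec x := by
  unfold Matrix.mulVec dotProduct; fun_prop

/-- The contribution `(-d_x, D v, -v)` of the block `(d_x, v)` to the constraints. -/
def opA (D : Matrix (Fin N) (Fin N) ℝ) (dx v : Fin N → ℝ) : Blk N → ℝ :=
  pack (-dx) (D.mulVec v) (-v)

/-- The contribution `(D u, -d_y, P u)` of the block `(d_y, u)` to the constraints. -/
def opB (D P : Matrix (Fin N) (Fin N) ℝ) (dy u : Fin N → ℝ) : Blk N → ℝ :=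
  pack (D.mulVec u) (-dy) (P.mulVec u)

/-- The range of `opA D`. -/
def setA (D : Matrix (Fin N) (Fin N) ℝ) : Set (Blk N → ℝ) :=
  {x | blk₂ x = -D.mulVec (blk₃ x)}

/-- The range of `opB D P` when `P` is the permutation matrix with `P u = u ∘ σ.symm`. -/
def setB (D : Matrix (Fin N) (Fin N) ℝ) (σ : Equiv.Perm (Fin N)) : Set (Blk N → ℝ) :=
  {y | blk₁ y = D.mulVec (blk₃ y ∘ σ)}

/-- The cost `lam * ‖d_x‖₁` as a function of `opA D d_x v`. -/
def objA (lam : ℝ) (x : Blk N → ℝ) : ℝ := lam * l1norm (blk₁ x)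

/-- The cost `lam * ‖d_y‖₁ + ½ ‖u - b‖²` as a function of `opB D P d_y u`; here `u = P⁻¹ (P u)` is
recovered from the third block by permuting with `σ`. -/
def objB (lam : ℝ) (b : Fin N → ℝ) (σ : Equiv.Perm (Fin N)) (y : Blk N → ℝ) : ℝ :=
  lam * l1norm (blk₂ y) + (1 / 2) * sqnorm (blk₃ y ∘ σ - b)

/-- The penalty weights `1/μ₁`, `1/μ₁`, `1/μ₂` of the three constraints. -/
def wts (μ₁ μ₂ : ℝ) : Blk N → ℝ := pack (fun _ => 1 / μ₁) (fun _ => 1 / μ₁) (fun _ => 1 / μ₂)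

theorem continuous_l1norm : Continuous (l1norm : (Fin N → ℝ) → ℝ) := by
  unfold l1norm; fun_prop

theorem continuous_sqnorm : Continuous (sqnorm : (Fin N → ℝ) → ℝ) := by
  unfold sqnorm; fun_prop

theorem continuous_objA (lam : ℝ) : Continuous (objA lam : (Blk N → ℝ) → ℝ) :=
  continuous_const.mul (continuous_l1norm.comp continuous_blk₁)

theorem continuous_objB (lam : ℝ) (b : Fin N → ℝ) (σ : Equiv.Perm (Fin N)) :
    Continuous (objB lam b σ) := by
  refine (continuous_const.mul (continuous_l1norm.comp continuous_blk₂)).add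
    (continuous_const.mul (continuous_sqnorm.comp ?_))
  unfold blk₃; fun_prop

theorem l1norm_combo_le (x y : Fin N → ℝ) {s t : ℝ} (hs : 0 ≤ s) (ht : 0 ≤ t) :
    l1norm (s • x + t • y) ≤ s * l1norm x + t * l1norm y := by
  simp only [l1norm, Finset.mul_sum, ← Finset.sum_add_distrib]
  refine Finset.sum_le_sum fun i _ => ?_
  simp only [Pi.add_apply, Pi.smul_apply, smul_eq_mul]
  refine (abs_add_le _ _).trans ?_
  rw [abs_mul, abs_mul, abs_of_nonneg hs, abs_of_nonneg ht]

theorem sqnorm_combo_le (x y b : Fin N → ℝ) {s t : ℝ} (hs : 0 ≤ s) (ht : 0 ≤ t) (hst : s + t = 1) :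
    sqnorm (s • x + t • y - b) ≤ s * sqnorm (x - b) + t * sqnorm (y - b) := by
  simp only [sqnorm, Finset.mul_sum, ← Finset.sum_add_distrib]
  refine Finset.sum_le_sum fun i _ => ?_
  simp only [Pi.add_apply, Pi.smul_apply, Pi.sub_apply, smul_eq_mul]
  obtain rfl : s = 1 - t := by linarith
  nlinarith [mul_nonneg (mul_nonneg hs ht) (sq_nonneg (x i - y i))]

theorem convex_setA (D : Matrix (Fin N) (Fin N) ℝ) : Convex ℝ (setA D) := by
  intro x hx y hy s t _ _ _
  have hx' : blk₂ x = -D.mulVec (blk₃ x) := hx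
  have hy' : blk₂ y = -D.mulVec (blk₃ y) := hy
  show s • blk₂ x + t • blk₂ y = -D.mulVec (s • blk₃ x + t • blk₃ y)
  rw [hx', hy', Matrix.mulVec_add, Matrix.mulVec_smul, Matrix.mulVec_smul]
  module

theorem convex_setB (D : Matrix (Fin N) (Fin N) ℝ) (σ : Equiv.Perm (Fin N)) :
    Convex ℝ (setB D σ) := by
  intro x hx y hy s t _ _ _
  have hx' : blk₁ x = D.mulVec (blk₃ x ∘ σ) := hx
  have hy' : blk₁ y = D.mulVec (blk₃ y ∘ σ) := hy
  show s • blk₁ x + t • blk₁ y = D.mulVec (s • (blk₃ x ∘ σ) + t • (blk₃ y ∘ σ))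
  rw [hx', hy', Matrix.mulVec_add, Matrix.mulVec_smul, Matrix.mulVec_smul]

theorem convexOn_objA (D : Matrix (Fin N) (Fin N) ℝ) {lam : ℝ} (hlam : 0 < lam) :
    ConvexOn ℝ (setA D) (objA lam) := by
  refine ⟨convex_setA D, fun x _ y _ s t hs ht _ => ?_⟩
  have h := mul_le_mul_of_nonneg_left (l1norm_combo_le (blk₁ x) (blk₁ y) hs ht) hlam.le
  show lam * l1norm (s • blk₁ x + t • blk₁ y)
    ≤ s * (lam * l1norm (blk₁ x)) + t * (lam * l1norm (blk₁ y))
  linarith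

theorem convexOn_objB (D : Matrix (Fin N) (Fin N) ℝ) (b : Fin N → ℝ) (σ : Equiv.Perm (Fin N))
    {lam : ℝ} (hlam : 0 < lam) : ConvexOn ℝ (setB D σ) (objB lam b σ) := by
  refine ⟨convex_setB D σ, fun x _ y _ s t hs ht hst => ?_⟩
  have h := mul_le_mul_of_nonneg_left (l1norm_combo_le (blk₂ x) (blk₂ y) hs ht) hlam.le
  have h' := sqnorm_combo_le (blk₃ x ∘ σ) (blk₃ y ∘ σ) b hs ht hst
  show lam * l1norm (s • blk₂ x + t • blk₂ y)
      + (1 / 2) * sqnorm (s • (blk₃ x ∘ σ) + t • (blk₃ y ∘ σ) - b)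
    ≤ s * (lam * l1norm (blk₂ x) + (1 / 2) * sqnorm (blk₃ x ∘ σ - b))
      + t * (lam * l1norm (blk₂ y) + (1 / 2) * sqnorm (blk₃ y ∘ σ - b))
  linarith

theorem isClosed_setA (D : Matrix (Fin N) (Fin N) ℝ) : IsClosed (setA D) :=
  isClosed_eq continuous_blk₂ ((continuous_mulVec D).comp continuous_blk₃).neg

theorem isClosed_setB (D : Matrix (Fin N) (Fin N) ℝ) (σ : Equiv.Perm (Fin N)) :
    IsClosed (setB D σ) :=
  isClosed_eq continuous_blk₁ ((continuous_mulVec D).comp (by unfold blk₃; fun_prop))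

theorem opA_mem (D : Matrix (Fin N) (Fin N) ℝ) (dx v : Fin N → ℝ) : opA D dx v ∈ setA D := by
  simp [setA, opA, Matrix.mulVec_neg]

theorem eq_opA {D : Matrix (Fin N) (Fin N) ℝ} {x : Blk N → ℝ} (hx : x ∈ setA D) :
    x = opA D (-blk₁ x) (-blk₃ x) := by
  have hx' : blk₂ x = -D.mulVec (blk₃ x) := hx
  rw [opA, neg_neg, neg_neg, Matrix.mulVec_neg, ← hx', pack_blk]

variable {D P : Matrix (Fin N) (Fin N) ℝ} {σ : Equiv.Perm (Fin N)}

theorem opB_mem (hP : ∀ u, P.mulVec u = u ∘ σ.symm) (dy u : Fin N → ℝ) :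
    opB D P dy u ∈ setB D σ := by
  simp [setB, opB, hP, Function.comp_assoc]

theorem eq_opB (hP : ∀ u, P.mulVec u = u ∘ σ.symm) {y : Blk N → ℝ} (hy : y ∈ setB D σ) :
    y = opB D P (-blk₂ y) (blk₃ y ∘ σ) := by
  have hy' : blk₁ y = D.mulVec (blk₃ y ∘ σ) := hy
  rw [opB, neg_neg, ← hy', hP, Function.comp_assoc, Equiv.self_comp_symm, Function.comp_id,
    pack_blk]

theorem objA_opA (lam : ℝ) (dx v : Fin N → ℝ) : objA lam (opA D dx v) = lam * l1norm dx := by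
  simp [objA, opA, l1norm]

theorem objB_opB (hP : ∀ u, P.mulVec u = u ∘ σ.symm) (lam : ℝ) (b dy u : Fin N → ℝ) :
    objB lam b σ (opB D P dy u) = lam * l1norm dy + (1 / 2) * sqnorm (u - b) := by
  simp [objB, opB, l1norm, hP, Function.comp_assoc]

theorem lagrangian_eq (hP : ∀ u, P.mulVec u = u ∘ σ.symm) (b : Fin N → ℝ) (lam : ℝ)
    (dx dy u v γx γy γz : Fin N → ℝ) :
    anisoLagrangian D P b lam dx dy u v γx γy γz
      = objA lam (opA D dx v) + objB lam b σ (opB D P dy u)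
        + ∑ i, pack γx γy γz i * opA D dx v i + ∑ i, pack γx γy γz i * opB D P dy u i := by
  rw [objA_opA, objB_opB hP, sum_blk, sum_blk]
  simp only [anisoLagrangian, dotv, opA, opB, pack, Sum.elim_inl, Sum.elim_inr, Pi.sub_apply,
    Pi.neg_apply, mul_sub, mul_neg, Finset.sum_sub_distrib, Finset.sum_neg_distrib]
  ring

theorem augLagrangian_eq (hP : ∀ u, P.mulVec u = u ∘ σ.symm) (b : Fin N → ℝ) (lam μ₁ μ₂ : ℝ)
    (dx dy u v γx γy γz : Fin N → ℝ) :
    anisoAugLagrangian D P b lam μ₁ μ₂ dx dy u v γx γy γz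
      = objA lam (opA D dx v) + objB lam b σ (opB D P dy u)
        + ∑ i, pack γx γy γz i * opA D dx v i + ∑ i, pack γx γy γz i * opB D P dy u i
        + (1 / 2) * ∑ i, wts μ₁ μ₂ i * (opA D dx v i + opB D P dy u i) ^ 2 := by
  rw [anisoAugLagrangian, lagrangian_eq hP, sum_blk fun i => wts μ₁ μ₂ i * _]
  simp only [sqnorm, opA, opB, wts, pack, Sum.elim_inl, Sum.elim_inr, Pi.sub_apply, Pi.neg_apply,
    ← Finset.mul_sum]
  have e1 : ∀ x y : Fin N → ℝ, ∑ i, (-x i + y i) ^ 2 = ∑ i, (y i - x i) ^ 2 := fun x y =>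
    Finset.sum_congr rfl fun i _ => by ring
  have e2 : ∀ x y : Fin N → ℝ, ∑ i, (x i + -y i) ^ 2 = ∑ i, (x i - y i) ^ 2 := fun x y =>
    Finset.sum_congr rfl fun i _ => by ring
  rw [e1, e1, e2, one_div, one_div, mul_inv, mul_inv]
  ring

theorem sum_mul_le_l1norm {lam : ℝ} {p : Fin N → ℝ} (hp : ∀ i, |p i| ≤ lam) (x : Fin N → ℝ) :
    ∑ i, p i * x i ≤ lam * l1norm x := by
  rw [l1norm, Finset.mul_sum]
  refine Finset.sum_le_sum fun i _ => (le_abs_self _).trans ?_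
  rw [abs_mul]
  exact mul_le_mul_of_nonneg_right (hp i) (abs_nonneg _)

/-- The saddle point is built from the dual solution `(p, q)` of `exists_box_dual` for the stacked
operator `[D; D P]`, with `γ_x = p`, `γ_y = q`, and `γ_z = Dᵀ q` forced by stationarity in `v`. -/
theorem exists_saddle (D : Matrix (Fin N) (Fin N) ℝ) (hP : ∀ u, P.mulVec u = u ∘ σ.symm)
    (b : Fin N → ℝ) {lam : ℝ} (hlam : 0 < lam) :
    ∃ a₀ c₀ g₀, IsSaddle (setA D) (setB D σ) (objA lam) (objB lam b σ) a₀ c₀ g₀ := by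
  obtain ⟨r, u, hr, hu, hmax⟩ := exists_box_dual (Matrix.fromRows D (D * P)) b hlam
  set p : Fin N → ℝ := fun i => r (.inl i) with hp
  set q : Fin N → ℝ := fun i => r (.inr i) with hq
  have hpb : ∀ i, |p i| ≤ lam := fun i => hr _
  have hqb : ∀ i, |q i| ≤ lam := fun i => hr _
  have hK : ∀ x, ∑ i, r i * (Matrix.fromRows D (D * P)).mulVec x i
      = ∑ i, p i * D.mulVec x i + ∑ i, q i * D.mulVec (P.mulVec x) i := by
    intro x
    rw [Fintype.sum_sum_type, Matrix.fromRows_mulVec]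
    simp [hp, hq]
  have hmax' : lam * l1norm (D.mulVec u) + lam * l1norm (D.mulVec (P.mulVec u))
      ≤ ∑ i, p i * D.mulVec u i + ∑ i, q i * D.mulVec (P.mulVec u) i := by
    rw [← hK, ← mul_add]
    refine le_trans (le_of_eq ?_) hmax
    rw [Fintype.sum_sum_type, Matrix.fromRows_mulVec]
    simp [l1norm]
  have h1 := sum_mul_le_l1norm hpb (D.mulVec u)
  have h2 := sum_mul_le_l1norm hqb (D.mulVec (P.mulVec u))
  have hadj : ∀ x, ∑ i, p i * D.mulVec x i + ∑ i, q i * D.mulVec (P.mulVec x) i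
      = ∑ j, (b j - u j) * x j := by
    intro x
    have h := Matrix.dotProduct_mulVec r (Matrix.fromRows D (D * P)) x
    rw [← hK]
    refine h.trans (Finset.sum_congr rfl fun j _ => ?_)
    have := congrFun hu j
    simp only [Pi.add_apply] at this
    rw [← this]; ring
  have hqD : ∀ x, ∑ i, D.vecMul q i * x i = ∑ i, q i * D.mulVec x i := fun x =>
    (Matrix.dotProduct_mulVec q D x).symm
  refine ⟨opA D (D.mulVec u) (P.mulVec u), opB D P (D.mulVec (P.mulVec u)) u,
    pack p q (D.vecMul q), opA_mem _ _ _, opB_mem hP _ _, ?_, fun x hx => ?_, fun y hy => ?_⟩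
  · funext i
    rcases i with i | i | i <;> simp [opA, opB, pack]
  · rw [eq_opA hx]
    generalize -blk₁ x = dx
    generalize -blk₃ x = v
    have h3 := sum_mul_le_l1norm hpb dx
    have e : ∀ dx v : Fin N → ℝ, ∑ i, pack p q (D.vecMul q) i * opA D dx v i
        = -∑ i, p i * dx i := by
      intro dx v
      rw [sum_blk]
      simp [opA, pack, hqD]
    rw [e, e, objA_opA, objA_opA]
    linarith
  · rw [eq_opB hP hy]
    generalize -blk₂ y = dy
    generalize blk₃ y ∘ σ = u'
    have h3 := sum_mul_le_l1norm hqb dy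
    have e : ∀ dy x : Fin N → ℝ, ∑ i, pack p q (D.vecMul q) i * opB D P dy x i
        = ∑ j, (b j - u j) * x j - ∑ i, q i * dy i := by
      intro dy x
      rw [← hadj, sum_blk]
      simp only [opB, pack, Sum.elim_inl, Sum.elim_inr, hqD, Pi.neg_apply, mul_neg,
        Finset.sum_neg_distrib]
      ring
    -- convexity of the quadratic: `u - b` is its gradient at `u`
    have hquad : (1 / 2) * sqnorm (u - b) + ∑ j, (b j - u j) * u j
        ≤ (1 / 2) * sqnorm (u' - b) + ∑ j, (b j - u j) * u' j := by
      simp only [sqnorm, Finset.mul_sum, ← Finset.sum_add_distrib, Pi.sub_apply]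
      exact Finset.sum_le_sum fun j _ => by nlinarith [sq_nonneg (u' j - u j)]
    rw [e, e, objB_opB hP, objB_opB hP]
    linarith

end Blocks

theorem Pmat_mulVec (n m : ℕ) (x : Fin (n * m) → ℝ) :
    (Pmat n m).mulVec x = x ∘ (colToRowPerm n m).symm := by
  funext k
  simp [Matrix.mulVec, dotProduct, Pmat, ← Equiv.symm_apply_eq]

/-- Global convergence of the ADAL algorithm (Algorithm 4) for anisotropic TV denoising:
the iterates converge, the limit is a Kuhn–Tucker pair of the split problem, and its
`u`-component minimizes the anisotropic TV denoising objective. -/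
theorem adal_aniso_tv_denoising_convergence (n m : ℕ) (hn : 1 ≤ n) (hm : 1 ≤ m)
    (b : Fin (n * m) → ℝ) (lam μ₁ μ₂ : ℝ)
    (hlam : 0 < lam) (hμ₁ : 0 < μ₁) (hμ₂ : 0 < μ₂)
    (dx dy u v γx γy γz : ℕ → Fin (n * m) → ℝ)
    -- (d_x^{k+1}, v^{k+1}) jointly minimizes the augmented Lagrangian over (d_x, v):
    (h1 : ∀ k dx' v',
      anisoAugLagrangian (Dmat (n * m)) (Pmat n m) b lam μ₁ μ₂
          (dx (k + 1)) (dy k) (u k) (v (k + 1)) (γx k) (γy k) (γz k)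
        ≤ anisoAugLagrangian (Dmat (n * m)) (Pmat n m) b lam μ₁ μ₂
          dx' (dy k) (u k) v' (γx k) (γy k) (γz k))
    -- (d_y^{k+1}, u^{k+1}) jointly minimizes the augmented Lagrangian over (d_y, u):
    (h2 : ∀ k dy' u',
      anisoAugLagrangian (Dmat (n * m)) (Pmat n m) b lam μ₁ μ₂
          (dx (k + 1)) (dy (k + 1)) (u (k + 1)) (v (k + 1)) (γx k) (γy k) (γz k)
        ≤ anisoAugLagrangian (Dmat (n * m)) (Pmat n m) b lam μ₁ μ₂
          (dx (k + 1)) dy' u' (v (k + 1)) (γx k) (γy k) (γz k))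
    -- multiplier updates:
    (h3 : ∀ k, γx (k + 1)
      = γx k + (1 / μ₁) • ((Dmat (n * m)).mulVec (u (k + 1)) - dx (k + 1)))
    (h4 : ∀ k, γy (k + 1)
      = γy k + (1 / μ₁) • ((Dmat (n * m)).mulVec (v (k + 1)) - dy (k + 1)))
    (h5 : ∀ k, γz (k + 1)
      = γz k + (1 / μ₂) • ((Pmat n m).mulVec (u (k + 1)) - v (k + 1))) :
    ∃ dxs dys us vs γxs γys γzs : Fin (n * m) → ℝ,
      -- the sequence converges to the limit point:
      Filter.Tendsto (fun k => (dx k, dy k, u k, v k, γx k, γy k, γz k)) Filter.atTop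
        (nhds (dxs, dys, us, vs, γxs, γys, γzs)) ∧
      -- the limit is a Kuhn–Tucker pair of the split problem: primal feasibility …
      dxs = (Dmat (n * m)).mulVec us ∧
      dys = (Dmat (n * m)).mulVec vs ∧
      vs = (Pmat n m).mulVec us ∧
      -- … and the primal limit minimizes the Lagrangian at the limit multipliers:
      (∀ dx' dy' u' v',
        anisoLagrangian (Dmat (n * m)) (Pmat n m) b lam dxs dys us vs γxs γys γzs
          ≤ anisoLagrangian (Dmat (n * m)) (Pmat n m) b lam dx' dy' u' v' γxs γys γzs) ∧
      -- in particular, us minimizes the anisotropic TV denoising objective: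
      (∀ u' : Fin (n * m) → ℝ,
        lam * (l1norm ((Dmat (n * m)).mulVec us)
            + l1norm ((Dmat (n * m)).mulVec ((Pmat n m).mulVec us)))
          + (1 / 2) * sqnorm (us - b)
        ≤ lam * (l1norm ((Dmat (n * m)).mulVec u')
            + l1norm ((Dmat (n * m)).mulVec ((Pmat n m).mulVec u')))
          + (1 / 2) * sqnorm (u' - b)) := by
  have hP := Pmat_mulVec n m
  set D := Dmat (n * m)
  set P := Pmat n m
  set σ := colToRowPerm n m
  obtain ⟨a₀, c₀, g₀, hs, ha, hc, hg⟩ := admm_converges (w := wts μ₁ μ₂)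
    (A := setA D) (B := setB D σ) (φ := objA lam) (ψ := objB lam b σ)
    (a := fun k => opA D (dx k) (v k)) (c := fun k => opB D P (dy k) (u k))
    (g := fun k => pack (γx k) (γy k) (γz k))
    (by rintro (i | i | i) <;> simp [wts, pack, hμ₁, hμ₂])
    (isClosed_setA D) (isClosed_setB D σ) (convexOn_objA D hlam) (convexOn_objB D b σ hlam)
    (continuous_objA lam) (continuous_objB lam b σ) (fun k => opA_mem _ _ _)
    (fun k => opB_mem hP _ _)
    (by
      intro k x hx
      have h := h1 k (-blk₁ x) (-blk₃ x)
      rw [augLagrangian_eq hP, augLagrangian_eq hP, ← eq_opA hx] at h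
      linarith)
    (by
      intro k y hy
      have h := h2 k (-blk₂ y) (blk₃ y ∘ σ)
      rw [augLagrangian_eq hP, augLagrangian_eq hP, ← eq_opB hP hy] at h
      simp only [add_comm (_ : ℝ) (opA D (dx (k + 1)) (v (k + 1)) _)]
      linarith)
    (by
      rintro k (i | i | i)
      · simp only [pack, wts, opA, opB, h3, Sum.elim_inl, Pi.add_apply,
          Pi.sub_apply, Pi.neg_apply, Pi.smul_apply, smul_eq_mul]
        ring
      · simp only [pack, wts, opA, opB, h4, Sum.elim_inl, Sum.elim_inr, Pi.add_apply,
          Pi.sub_apply, Pi.neg_apply, Pi.smul_apply, smul_eq_mul]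
        ring
      · simp only [pack, wts, opA, opB, h5, Sum.elim_inr, Pi.add_apply,
          Pi.sub_apply, Pi.neg_apply, Pi.smul_apply, smul_eq_mul]
        ring)
    (exists_saddle D hP b hlam)
  set us : Fin (n * m) → ℝ := blk₃ c₀ ∘ σ with hus
  set dys : Fin (n * m) → ℝ := -blk₂ c₀ with hdys
  set dxs : Fin (n * m) → ℝ := -blk₁ a₀ with hdxs
  set vs : Fin (n * m) → ℝ := -blk₃ a₀ with hvs
  have hA0 : a₀ = opA D dxs vs := eq_opA hs.memA
  have hB0 : c₀ = opB D P dys us := eq_opB hP hs.memB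
  have feas := hs.feas
  rw [hA0, hB0] at feas
  have f1 : dxs = D.mulVec us := by
    funext i
    have := congrFun feas (.inl i)
    simp only [opA, opB, pack, Pi.add_apply, Sum.elim_inl, Pi.neg_apply, Pi.zero_apply] at this
    linarith
  have f2 : dys = D.mulVec vs := by
    funext i
    have := congrFun feas (.inr (.inl i))
    simp only [opA, opB, pack, Pi.add_apply, Sum.elim_inl, Sum.elim_inr, Pi.neg_apply,
      Pi.zero_apply] at this
    linarith
  have f3 : vs = P.mulVec us := by
    funext i
    have := congrFun feas (.inr (.inr i))
    simp only [opA, opB, pack, Pi.add_apply, Sum.elim_inr, Pi.neg_apply, Pi.zero_apply] at this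
    linarith
  have hL : ∀ dx' dy' u' v',
      anisoLagrangian D P b lam dxs dys us vs (blk₁ g₀) (blk₂ g₀) (blk₃ g₀)
        ≤ anisoLagrangian D P b lam dx' dy' u' v' (blk₁ g₀) (blk₂ g₀) (blk₃ g₀) := by
    intro dx' dy' u' v'
    rw [lagrangian_eq hP, lagrangian_eq hP, pack_blk, ← hA0, ← hB0]
    linarith [hs.minA _ (opA_mem D dx' v'), hs.minB _ (opB_mem (D := D) hP dy' u')]
  refine ⟨dxs, dys, us, vs, blk₁ g₀, blk₂ g₀, blk₃ g₀, ?_, f1, f2, f3, hL, fun u' => ?_⟩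
  · have tdx : Tendsto dx atTop (𝓝 dxs) := by
      simpa [opA] using ((continuous_blk₁.tendsto _).comp ha).neg
    have tv : Tendsto v atTop (𝓝 vs) := by
      simpa [opA] using ((continuous_blk₃.tendsto _).comp ha).neg
    have tdy : Tendsto dy atTop (𝓝 dys) := by
      simpa [opB] using ((continuous_blk₂.tendsto _).comp hc).neg
    have tu : Tendsto u atTop (𝓝 us) := by
      have hcont : Continuous fun y : Blk (n * m) → ℝ => blk₃ y ∘ σ := by unfold blk₃; fun_prop
      refine ((hcont.tendsto _).comp hc).congr fun k => ?_
      simp [opB, hP, Function.comp_assoc]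
    exact tdx.prodMk_nhds (tdy.prodMk_nhds (tu.prodMk_nhds (tv.prodMk_nhds
      (((continuous_blk₁.tendsto _).comp hg).prodMk_nhds
        (((continuous_blk₂.tendsto _).comp hg).prodMk_nhds
          ((continuous_blk₃.tendsto _).comp hg))))))
  · -- on feasible points the Lagrangian is the objective
    have h := hL (D.mulVec u') (D.mulVec (P.mulVec u')) u' (P.mulVec u')
    rw [f1, f2, f3] at h
    simpa [anisoLagrangian, dotv] using h

end
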